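/- arXiv:2209.11149 — 2 statements merged into one kernel-verified Lean document; each statement's English description precedes it below -/
import Mathlib

section
/- Let n ≥ 1, let Ω ⊆ ℝⁿ be open and connected, let f : Ω → ℝ and X : Ω → ℝⁿ be smooth, and suppose the gradient ∇f has a unique zero x̄ ∈ Ω, at which f attains its minimum. Assume the Hessian H := D²f(x̄) is nondegenerate and that X and ∇f are real-analytic on a neighbourhood of x̄. Then there exists a smooth map g : Ω → Matrix (Fin n) (Fin n) ℝ with g(x) symmetric positive definite for all x ∈ Ω and ∇f(x) = g(x) · X(x) for all x ∈ Ω, if and only if: (i) ⟨X(x), ∇f(x)⟩ > 0 for all x ∈ Ω with x ≠ x̄; (ii) X(x̄) = 0; (iii) the linear map Λ := DX(x̄) : ℝⁿ → ℝⁿ is symmetric and positive with respect to the Hessian scalar product, i.e. ⟨H(Λz), w⟩ = ⟨H z, Λw⟩ for all z, w ∈ ℝⁿ and ⟨H(Λz), z⟩ > 0 for all z ≠ 0. -/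
/-!
If `∇f = g X`, then `⟨X, ∇f⟩ = ⟨X, g X⟩` and `X` vanishes exactly where `∇f` does.
Differentiating at `x₀` gives `H = g(x₀) Λ`, and (iii) follows from the symmetry and positivity
of `g(x₀)`.

Conversely, the matrices `A > 0` with `A (X x) = ∇f x` form a convex set, so by a partition of unity
`g` only has to be found locally. Away from `x₀` there is an explicit formula. Near `x₀` the map `X`
is a local diffeomorphism, since `Λ` is injective; in the coordinate `y = X x` the gradient becomes
a map `G` with `G 0 = 0` and `C := DG(0) = H Λ⁻¹ > 0`. Two applications of Hadamard's lemma give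
`G y = C y + B(y)(y, y)` with `B` smooth and symmetric. The matrix `B(y)(y, ·)` need not be
symmetric, but another matrix, linear in `B` and in `y`, is symmetric and has the same product
with `y`.
-/

open Set Filter MeasureTheory Matrix
open scoped Topology ContDiff Manifold

section Gluing

variable {E F : Type*} [NormedAddCommGroup E] [NormedSpace ℝ E] [FiniteDimensional ℝ E]
  [NormedAddCommGroup F] [NormedSpace ℝ F] {Ω : Set E} {n : ℕ∞}

theorem exists_contDiffOn_forall_mem_convex_of_local (hΩ : IsOpen Ω) {t : E → Set F}
    (ht : ∀ x ∈ Ω, Convex ℝ (t x))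
    (hloc : ∀ x ∈ Ω, ∃ U ∈ 𝓝 x, ∃ g : E → F, ContDiffOn ℝ n g U ∧ ∀ y ∈ U, g y ∈ t y) :
    ∃ g : E → F, ContDiffOn ℝ n g Ω ∧ ∀ x ∈ Ω, g x ∈ t x := by
  let M : TopologicalSpace.Opens E := ⟨Ω, hΩ⟩
  have : LocallyCompactSpace M := hΩ.locallyCompactSpace
  obtain ⟨g, hg⟩ := exists_contMDiffMap_forall_mem_convex_of_local 𝓘(ℝ, E) (M := M) (n := n)
    (t := fun x => t x) (fun x => ht x x.2) fun x => by
      obtain ⟨U, hU, g, hgs, hgt⟩ := hloc x x.2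
      exact ⟨Subtype.val ⁻¹' U, continuous_subtype_val.continuousAt hU, g ∘ Subtype.val,
        hgs.contMDiffOn.comp contMDiff_subtype_val.contMDiffOn Subset.rfl, fun y hy => hgt y hy⟩
  have g_extend (x : M) : Subtype.val.extend g 0 (x : E) = g x :=
    Subtype.val_injective.extend_apply g 0 x
  refine ⟨Subtype.val.extend g 0, fun x hx => ContDiffAt.contDiffWithinAt ?_, fun x hx => ?_⟩
  · rw [← contMDiffAt_iff_contDiffAt, ← contMDiffAt_subtype_iff (U := M) (x := ⟨x, hx⟩)]
    simpa only [g_extend] using g.contMDiff.contMDiffAt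
  · simpa only [g_extend ⟨x, hx⟩] using hg ⟨x, hx⟩

theorem exists_contDiff_eventuallyEq (hΩ : IsOpen Ω) {f : E → F} (hf : ContDiffOn ℝ n f Ω)
    {x₀ : E} (hx₀ : x₀ ∈ Ω) : ∃ f' : E → F, ContDiff ℝ n f' ∧ f' =ᶠ[𝓝 x₀] f := by
  obtain ⟨K, hK, hKc, hKΩ⟩ := exists_mem_nhds_isClosed_subset (hΩ.mem_nhds hx₀)
  obtain ⟨f', hf', hf'K⟩ := exists_contDiffOn_forall_mem_convex_of_local (n := n) isOpen_univ
    (t := fun x => {v : F | x ∈ K → v = f x})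
    (fun x _ v hv w hw a b _ _ hab hx => by rw [hv hx, hw hx, Convex.combo_self hab])
    (fun x _ => by
      by_cases hx : x ∈ K
      · exact ⟨Ω, hΩ.mem_nhds (hKΩ hx), f, hf, fun y _ _ => rfl⟩
      · exact ⟨Kᶜ, hKc.isOpen_compl.mem_nhds hx, 0, contDiffOn_const,
          fun y hy hyK => absurd hyK hy⟩)
  exact ⟨f', contDiffOn_univ.1 hf', eventually_of_mem hK fun x hx => hf'K x trivial hx⟩

end Gluing

section Hadamard

open ContinuousLinearMap in
open scoped Convolution in
theorem contDiff_setIntegral_of_isCompact {P G F : Type*}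
    [NormedAddCommGroup P] [NormedSpace ℝ P]
    [NormedAddCommGroup G] [NormedSpace ℝ G] [FiniteDimensional ℝ G]
    [MeasurableSpace G] [BorelSpace G]
    [NormedAddCommGroup F] [NormedSpace ℝ F]
    {μ : Measure G} [IsLocallyFiniteMeasure μ] {n : ℕ∞} {K : P → G → F}
    (hK : ContDiff ℝ n ↿K) {S : Set G} (hS : IsCompact S) :
    ContDiff ℝ n fun p => ∫ t in S, K p t ∂μ := by
  -- Cutting `K` off outside `S` makes the integral a convolution with the indicator of `S`.
  obtain ⟨r, hr, hSr⟩ := hS.isBounded.subset_closedBall_lt 0 0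
  let χ : ContDiffBump (0 : G) := ⟨r, r + 1, hr, by linarith⟩
  let φ : P → G → F := fun p s => χ (-s) • K p (-s)
  have hφ : ContDiff ℝ n ↿φ :=
    (χ.contDiff.comp contDiff_snd.neg).smul (hK.comp (contDiff_fst.prodMk contDiff_snd.neg))
  have hφ_supp (p : P) (s : G) (_ : p ∈ univ) (hs : s ∉ Metric.closedBall (0 : G) (r + 1)) :
      φ p s = 0 := by
    have : χ (-s) = 0 := χ.zero_of_le_dist (by simpa using (not_le.1 (by simpa using hs)).le)
    simp only [φ, this, zero_smul]
  have hind : LocallyIntegrable (S.indicator (1 : G → ℝ)) μ :=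
    (integrable_indicator_iff hS.measurableSet).2
      (integrableOn_const hS.measure_lt_top.ne) |>.locallyIntegrable
  have hconv := contDiffOn_univ.1 (univ_prod_univ ▸ contDiffOn_convolution_right_with_param
    (lsmul ℝ ℝ) isOpen_univ (isCompact_closedBall 0 (r + 1)) hφ_supp hind hφ.contDiffOn)
  convert hconv.comp (contDiff_id.prodMk (contDiff_const (c := (0 : G)))) using 2 with p
  rw [Function.comp_apply, convolution_lsmul, ← integral_indicator hS.measurableSet]
  refine integral_congr_ae (Eventually.of_forall fun t => ?_)
  by_cases ht : t ∈ S
  · simp [φ, ht, χ.one_of_mem_closedBall (hSr ht)]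
  · simp [ht]

variable {E F : Type*} [NormedAddCommGroup E] [NormedSpace ℝ E]
  [NormedAddCommGroup F] [NormedSpace ℝ F] [CompleteSpace F]

theorem exists_contDiff_eq_add_clm_sub {n : ℕ∞} {f : E → F} (hf : ContDiff ℝ (n + 1) f) (x₀ : E) :
    ∃ A : E → E →L[ℝ] F,
      ContDiff ℝ n A ∧ A x₀ = fderiv ℝ f x₀ ∧ ∀ x, f x = f x₀ + A x (x - x₀) := by
  have hf' : ContDiff ℝ n (fderiv ℝ f) := hf.fderiv_right le_rfl
  have hK : ContDiff ℝ n fun q : E × ℝ => fderiv ℝ f (x₀ + q.2 • (q.1 - x₀)) := by fun_prop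
  refine ⟨fun x => ∫ t in Icc (0 : ℝ) 1, fderiv ℝ f (x₀ + t • (x - x₀)),
    contDiff_setIntegral_of_isCompact hK isCompact_Icc, by simp, fun x => ?_⟩
  have hcont : Continuous fun t : ℝ => fderiv ℝ f (x₀ + t • (x - x₀)) :=
    hf'.continuous.comp (by fun_prop)
  have hderiv (t : ℝ) : HasDerivAt (fun t : ℝ => f (x₀ + t • (x - x₀)))
      (fderiv ℝ f (x₀ + t • (x - x₀)) (x - x₀)) t := by
    have hline : HasDerivAt (fun t : ℝ => x₀ + t • (x - x₀)) (x - x₀) t := by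
      simpa using ((hasDerivAt_id t).smul_const (x - x₀)).const_add x₀
    exact ((hf.differentiable (by simp)) _).hasFDerivAt.comp_hasDerivAt t hline
  have hftc : ∫ t in (0 : ℝ)..1, fderiv ℝ f (x₀ + t • (x - x₀)) (x - x₀) = f x - f x₀ := by
    rw [intervalIntegral.integral_eq_sub_of_hasDerivAt (fun t _ => hderiv t)
      (hcont.clm_apply continuous_const |>.intervalIntegrable _ _)]
    simp
  rw [ContinuousLinearMap.integral_apply hcont.continuousOn.integrableOn_Icc,
    integral_Icc_eq_integral_Ioc, ← intervalIntegral.integral_of_le zero_le_one, hftc,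
    add_sub_cancel]

end Hadamard

section InverseFunction

theorem exists_contDiff_comp_eventuallyEq {E E' F : Type*}
    [NormedAddCommGroup E] [NormedSpace ℝ E] [CompleteSpace E]
    [NormedAddCommGroup E'] [NormedSpace ℝ E'] [FiniteDimensional ℝ E']
    [NormedAddCommGroup F] [NormedSpace ℝ F] {n : ℕ∞} (hn : n ≠ 0) {Ω : Set E} (hΩ : IsOpen Ω)
    {X : E → E'} {G : E → F} (hX : ContDiffOn ℝ n X Ω) (hG : ContDiffOn ℝ n G Ω)
    {x₀ : E} (hx₀ : x₀ ∈ Ω) {e : E ≃L[ℝ] E'} (he : fderiv ℝ X x₀ = e) :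
    ∃ G' : E' → F, ContDiff ℝ n G' ∧ G' ∘ X =ᶠ[𝓝 x₀] G := by
  have hn' : (n : WithTop ℕ∞) ≠ 0 := by exact_mod_cast hn
  have hXat {x} (hx : x ∈ Ω) : ContDiffAt ℝ n X x := hX.contDiffAt (hΩ.mem_nhds hx)
  have hXderiv {x} (hx : x ∈ Ω) : HasFDerivAt X (fderiv ℝ X x) x :=
    ((hXat hx).differentiableAt hn').hasFDerivAt
  let U := Ω ∩ fderiv ℝ X ⁻¹' range ((↑) : (E ≃L[ℝ] E') → E →L[ℝ] E')
  have hU : IsOpen U := (hX.continuousOn_fderiv_of_isOpen hΩ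
    (ENat.one_le_iff_ne_zero_withTop.2 hn')).isOpen_inter_preimage hΩ ContinuousLinearEquiv.isOpen
  have hxU : x₀ ∈ U := ⟨hx₀, e, he.symm⟩
  let Φ := ((hXat hx₀).toOpenPartialHomeomorph X (he ▸ hXderiv hx₀) hn').restrOpen U hU
  have hxΦ : x₀ ∈ Φ.source :=
    ⟨(hXat hx₀).mem_toOpenPartialHomeomorph_source (he ▸ hXderiv hx₀) hn', hxU⟩
  have hΦU {y} (hy : y ∈ Φ.target) : Φ.symm y ∈ U := (Φ.map_target hy).2
  have hΦsymm : ContDiffOn ℝ n Φ.symm Φ.target := fun y hy => by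
    obtain ⟨hyΩ, e', he'⟩ := hΦU hy
    exact (Φ.contDiffAt_symm hy (he' ▸ hXderiv hyΩ) (hXat hyΩ)).contDiffWithinAt
  obtain ⟨G', hG', hG'eq⟩ := exists_contDiff_eventuallyEq Φ.open_target
    (hG.comp hΦsymm fun y hy => (hΦU hy).1) (Φ.map_source hxΦ)
  refine ⟨G', hG', ?_⟩
  filter_upwards [(Φ.continuousAt hxΦ).eventually hG'eq, Φ.open_source.mem_nhds hxΦ] with x hx hxs
  exact hx.trans (congrArg G (Φ.left_inv hxs))

end InverseFunction

section Coordinates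

theorem sum_smul_map_single {ι R M T : Type*} [Fintype ι] [DecidableEq ι] [Semiring R]
    [AddCommMonoid M] [Module R M] [FunLike T (ι → R) M] [LinearMapClass T R (ι → R) M]
    (φ : T) (v : ι → R) : ∑ j, v j • φ (Pi.single j 1) = φ v := by
  conv_rhs => rw [pi_eq_sum_univ' v, map_sum]
  simp only [map_smul]

theorem mulVec_dotProduct_of_isSymm {ι R : Type*} [Fintype ι] [CommSemiring R]
    {A : Matrix ι ι R} (hA : A.IsSymm) (v w : ι → R) : A *ᵥ v ⬝ᵥ w = v ⬝ᵥ A *ᵥ w := by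
  rw [dotProduct_mulVec, ← mulVec_transpose, hA.eq]

theorem fderiv_mulVec_of_eq_zero {𝕜 E ι κ : Type*} [NontriviallyNormedField 𝕜] [Fintype ι]
    [Finite κ] [NormedAddCommGroup E] [NormedSpace 𝕜 E] {g : E → Matrix κ ι 𝕜} {X : E → ι → 𝕜}
    {x₀ : E} (hg : ∀ i j, DifferentiableAt 𝕜 (fun x => g x i j) x₀)
    (hX : DifferentiableAt 𝕜 X x₀) (hX0 : X x₀ = 0) (z : E) :
    fderiv 𝕜 (fun x => g x *ᵥ X x) x₀ z = g x₀ *ᵥ fderiv 𝕜 X x₀ z := by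
  have := Fintype.ofFinite κ
  have hXj (j : ι) := hasFDerivAt_pi'.1 hX.hasFDerivAt j
  have hcoord (i : κ) : HasFDerivAt (fun x => (g x *ᵥ X x) i)
      (∑ j, (g x₀ i j • ContinuousLinearMap.proj j ∘L fderiv 𝕜 X x₀ +
        X x₀ j • fderiv 𝕜 (fun x => g x i j) x₀)) x₀ :=
    .fun_sum fun j _ => (hg i j).hasFDerivAt.mul (hXj j)
  rw [(hasFDerivAt_pi.2 hcoord).fderiv]
  ext i
  simp [hX0, mulVec, dotProduct]

end Coordinates

section PosDef

theorem eventually_posDef_of_isHermitian {ι : Type*} [Finite ι] {A : Matrix ι ι ℝ}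
    (hA : A.PosDef) : ∀ᶠ B in 𝓝 A, B.IsHermitian → B.PosDef := by
  have := Fintype.ofFinite ι
  have hsphere : ∀ᶠ B in 𝓝 A, ∀ u ∈ Metric.sphere (0 : ι → ℝ) 1, 0 < u ⬝ᵥ B *ᵥ u := by
    refine (isCompact_sphere _ _).eventually_forall_of_forall_eventually fun u hu => ?_
    have hcont : Continuous fun q : Matrix ι ι ℝ × (ι → ℝ) => q.2 ⬝ᵥ q.1 *ᵥ q.2 := by fun_prop
    refine hcont.continuousAt.eventually_const_lt ?_
    simpa using hA.dotProduct_mulVec_pos (ne_zero_of_mem_unit_sphere ⟨u, hu⟩)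
  filter_upwards [hsphere] with B hB hBh
  refine .of_dotProduct_mulVec_pos hBh fun u hu => ?_
  have hscale := hB (‖u‖⁻¹ • u) (by simp [norm_smul, hu])
  rw [mulVec_smul, smul_dotProduct, dotProduct_smul, smul_smul] at hscale
  exact pos_of_mul_pos_right hscale (by positivity)

variable {ι : Type*} [Fintype ι]

/-- The positive definite symmetric matrices with `w = A v`: the admissible values of `g x` for
`v = X x` and `w = ∇f x`. -/
def posDefSending (v w : ι → ℝ) : Set (Matrix ι ι ℝ) :=
  {A | A.PosDef ∧ w = A *ᵥ v}

theorem convex_posDefSending (v w : ι → ℝ) : Convex ℝ (posDefSending v w) := by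
  refine convex_iff_forall_pos.2 fun A ⟨hA, hAv⟩ B ⟨hB, hBv⟩ a b ha hb hab => ⟨?_, ?_⟩
  · exact (hA.smul ha).add (hB.smul hb)
  · rw [add_mulVec, smul_mulVec, smul_mulVec, ← hAv, ← hBv, Convex.combo_self hab]

theorem mem_posDefSending_dotProduct_pos {A : Matrix ι ι ℝ} {v w : ι → ℝ}
    (hA : A ∈ posDefSending v w) (hv : v ≠ 0) : 0 < v ⬝ᵥ w := by
  simpa [← hA.2] using hA.1.dotProduct_mulVec_pos hv

theorem dotProduct_self_pos_of_dotProduct_pos {v w : ι → ℝ} (h : 0 < v ⬝ᵥ w) : 0 < v ⬝ᵥ v := by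
  have hv : v ≠ 0 := by rintro rfl; simp at h
  simpa using dotProduct_star_self_pos_iff.2 hv

variable [DecidableEq ι]

theorem posDef_toMatrix'_of_surjective {T L : (ι → ℝ) →ₗ[ℝ] ι → ℝ} (hL : Function.Surjective L)
    (hsymm : ∀ z w, L z ⬝ᵥ T (L w) = T (L z) ⬝ᵥ L w) (hpos : ∀ z ≠ 0, 0 < L z ⬝ᵥ T (L z)) :
    (LinearMap.toMatrix' T).PosDef := by
  refine .of_dotProduct_mulVec_pos ?_ fun u hu => ?_
  · ext i j
    obtain ⟨z, hz⟩ := hL (Pi.single i 1)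
    obtain ⟨w, hw⟩ := hL (Pi.single j 1)
    simpa [hz, hw, LinearMap.toMatrix'_apply] using (hsymm z w).symm
  · obtain ⟨z, rfl⟩ := hL u
    rw [star_trivial, LinearMap.toMatrix'_mulVec]
    exact hpos z (by rintro rfl; exact hu (map_zero L))

/-- The Broyden–Fletcher–Goldfarb–Shanno update of the identity matrix: it sends `v` to `w`, and
its quadratic form is that of the projection orthogonal to `v` plus a multiple of `(w ⬝ᵥ ·) ^ 2`. It
is only meaningful for `v ⬝ᵥ w ≠ 0`. -/
noncomputable def bfgsMatrix (v w : ι → ℝ) : Matrix ι ι ℝ :=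
  (v ⬝ᵥ w)⁻¹ • vecMulVec w w + (1 - (v ⬝ᵥ v)⁻¹ • vecMulVec v v)

theorem bfgsMatrix_mulVec (v w u : ι → ℝ) :
    bfgsMatrix v w *ᵥ u = ((w ⬝ᵥ u) / (v ⬝ᵥ w)) • w + (u - ((v ⬝ᵥ u) / (v ⬝ᵥ v)) • v) := by
  simp only [bfgsMatrix, add_mulVec, sub_mulVec, smul_mulVec, one_mulVec, vecMulVec_mulVec,
    op_smul_eq_smul, smul_smul, div_eq_inv_mul]

theorem dotProduct_bfgsMatrix_mulVec_self {v : ι → ℝ} (hv : v ⬝ᵥ v ≠ 0) (w u : ι → ℝ) :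
    u ⬝ᵥ bfgsMatrix v w *ᵥ u = (w ⬝ᵥ u) ^ 2 / (v ⬝ᵥ w) +
      (u - ((v ⬝ᵥ u) / (v ⬝ᵥ v)) • v) ⬝ᵥ (u - ((v ⬝ᵥ u) / (v ⬝ᵥ v)) • v) := by
  have horth : v ⬝ᵥ (u - ((v ⬝ᵥ u) / (v ⬝ᵥ v)) • v) = 0 := by
    rw [dotProduct_sub, dotProduct_smul, smul_eq_mul, div_mul_cancel₀ _ hv, sub_self]
  rw [bfgsMatrix_mulVec, dotProduct_add, dotProduct_smul, sub_dotProduct u, smul_dotProduct, horth,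
    smul_zero, sub_zero, dotProduct_comm u w, smul_eq_mul, div_mul_eq_mul_div, sq]

theorem bfgsMatrix_mem_posDefSending {v w : ι → ℝ} (h : 0 < v ⬝ᵥ w) :
    bfgsMatrix v w ∈ posDefSending v w := by
  have hvv : 0 < v ⬝ᵥ v := dotProduct_self_pos_of_dotProduct_pos h
  refine ⟨.of_dotProduct_mulVec_pos ?_ fun u hu => ?_, ?_⟩
  · ext i j
    simp [bfgsMatrix, vecMulVec_apply, one_apply, mul_comm, eq_comm]
  · rw [star_trivial, dotProduct_bfgsMatrix_mulVec_self hvv.ne']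
    set c := (v ⬝ᵥ u) / (v ⬝ᵥ v)
    obtain hparallel | hne := eq_or_ne (u - c • v) 0
    · have huv : u = c • v := sub_eq_zero.1 hparallel
      have hc : c ≠ 0 := fun hc => hu (by rw [huv, hc, zero_smul])
      have hwu : w ⬝ᵥ u ≠ 0 := by
        rw [huv, dotProduct_smul, dotProduct_comm]
        exact mul_ne_zero hc h.ne'
      rw [hparallel, zero_dotProduct]
      positivity
    · have : 0 < (u - c • v) ⬝ᵥ (u - c • v) := by simpa using dotProduct_star_self_pos_iff.2 hne
      positivity
  · rw [bfgsMatrix_mulVec, dotProduct_comm w v, div_self h.ne', div_self hvv.ne', one_smul,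
      one_smul, sub_self, add_zero]

theorem contDiffAt_bfgsMatrix_apply {E : Type*} [NormedAddCommGroup E] [NormedSpace ℝ E]
    {n : WithTop ℕ∞} {v w : E → ι → ℝ} {x : E} (hv : ContDiffAt ℝ n v x) (hw : ContDiffAt ℝ n w x)
    (h : 0 < v x ⬝ᵥ w x) (i j : ι) : ContDiffAt ℝ n (fun y => bfgsMatrix (v y) (w y) i j) x := by
  have hdot {a b : E → ι → ℝ} (ha : ContDiffAt ℝ n a x) (hb : ContDiffAt ℝ n b x) :
      ContDiffAt ℝ n (fun y => a y ⬝ᵥ b y) x := by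
    simp only [dotProduct]
    fun_prop
  have hvw := (hdot hv hw).inv h.ne'
  have hvv := (hdot hv hv).inv (dotProduct_self_pos_of_dotProduct_pos h).ne'
  have hvi := contDiffAt_pi.1 hv
  have hwi := contDiffAt_pi.1 hw
  exact (hvw.mul ((hwi i).mul (hwi j))).add
    (contDiffAt_const.sub (hvv.mul ((hvi i).mul (hvi j))))

end PosDef

section Koszul

variable {ι : Type*} [Fintype ι] [DecidableEq ι]

/-- For symmetric `B`, a symmetric matrix with the same product with `v` as `B v`. As in the Koszul
formula for the Levi-Civita connection, the failure of symmetry of `⟨B e_j v, e_i⟩` is corrected by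
a signed sum over the permutations of the three arguments. -/
noncomputable def koszulMatrix (B : (ι → ℝ) →L[ℝ] (ι → ℝ) →L[ℝ] (ι → ℝ)) (v : ι → ℝ) :
    Matrix ι ι ℝ :=
  .of fun i j => B (Pi.single j 1) v i + B (Pi.single i 1) v j -
    v ⬝ᵥ B (Pi.single i 1) (Pi.single j 1)

theorem koszulMatrix_isSymm {B : (ι → ℝ) →L[ℝ] (ι → ℝ) →L[ℝ] (ι → ℝ)} (hB : B.flip = B)
    (v : ι → ℝ) : (koszulMatrix B v).IsSymm := by
  ext i j
  have hswap : B (Pi.single j 1) (Pi.single i 1) = B (Pi.single i 1) (Pi.single j 1) := by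
    conv_lhs => rw [← hB, ContinuousLinearMap.flip_apply]
  simp only [koszulMatrix, transpose_apply, of_apply, hswap, add_comm]

theorem koszulMatrix_mulVec_self (B : (ι → ℝ) →L[ℝ] (ι → ℝ) →L[ℝ] (ι → ℝ)) (v : ι → ℝ) :
    koszulMatrix B v *ᵥ v = B v v := by
  ext i
  have hfst : ∑ j, v j * B (Pi.single j 1) v i = B v v i := by
    simpa [Finset.sum_apply] using congrFun (sum_smul_map_single (B.flip v) v) i
  have hlast : ∑ j, v j * (v ⬝ᵥ B (Pi.single i 1) (Pi.single j 1)) = v ⬝ᵥ B (Pi.single i 1) v := by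
    rw [← sum_smul_map_single (B (Pi.single i 1)) v, dotProduct_sum]
    simp
  calc (koszulMatrix B v *ᵥ v) i
      = ∑ j, v j * B (Pi.single j 1) v i + v ⬝ᵥ B (Pi.single i 1) v -
          ∑ j, v j * (v ⬝ᵥ B (Pi.single i 1) (Pi.single j 1)) := by
        simp only [koszulMatrix, mulVec, dotProduct, of_apply, ← Finset.sum_add_distrib,
          ← Finset.sum_sub_distrib]
        exact Finset.sum_congr rfl fun j _ => by ring
    _ = B v v i := by rw [hfst, hlast, add_sub_cancel_right]

theorem contDiff_koszulMatrix_apply {E : Type*} [NormedAddCommGroup E] [NormedSpace ℝ E]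
    {n : WithTop ℕ∞} {B : E → (ι → ℝ) →L[ℝ] (ι → ℝ) →L[ℝ] ι → ℝ} {v : E → ι → ℝ}
    (hB : ContDiff ℝ n B) (hv : ContDiff ℝ n v) (i j : ι) :
    ContDiff ℝ n fun y => koszulMatrix (B y) (v y) i j := by
  simp only [koszulMatrix, of_apply, dotProduct]
  fun_prop

theorem exists_symm_matrix_mulVec_eq {G : (ι → ℝ) → ι → ℝ} (hG : ContDiff ℝ ∞ G) (hG0 : G 0 = 0)
    (hsymm : (LinearMap.toMatrix' (fderiv ℝ G 0 : (ι → ℝ) →ₗ[ℝ] ι → ℝ)).IsSymm) :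
    ∃ S : (ι → ℝ) → Matrix ι ι ℝ, (∀ i j, ContDiff ℝ ∞ fun y => S y i j) ∧ (∀ y, (S y).IsSymm) ∧
      S 0 = LinearMap.toMatrix' (fderiv ℝ G 0 : (ι → ℝ) →ₗ[ℝ] ι → ℝ) ∧ ∀ y, S y *ᵥ y = G y := by
  obtain ⟨A, hA, hA0, hGA⟩ := exists_contDiff_eq_add_clm_sub (n := ⊤) hG 0
  obtain ⟨D, hD, -, hAD⟩ := exists_contDiff_eq_add_clm_sub (n := ⊤) hA 0
  let B (y : ι → ℝ) : (ι → ℝ) →L[ℝ] (ι → ℝ) →L[ℝ] ι → ℝ := (2⁻¹ : ℝ) • (D y + (D y).flip)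
  have hB : ContDiff ℝ ∞ B := contDiff_clm_apply_iff.2 fun u => contDiff_clm_apply_iff.2 fun w => by
    simp only [B, _root_.smul_apply, _root_.add_apply, ContinuousLinearMap.flip_apply]
    fun_prop
  have hBflip (y : ι → ℝ) : (B y).flip = B y := by
    ext u w i
    simp [B, add_comm]
  have hBself (y : ι → ℝ) : B y y y = D y y y := by
    simp only [B, _root_.smul_apply, _root_.add_apply, ContinuousLinearMap.flip_apply, ← two_smul ℝ,
      smul_smul]
    norm_num
  refine ⟨fun y => LinearMap.toMatrix' (A 0 : (ι → ℝ) →ₗ[ℝ] ι → ℝ) + koszulMatrix (B y) y,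
    fun i j => ?_, fun y => ?_, ?_, fun y => ?_⟩
  · exact (contDiff_const (c := LinearMap.toMatrix' (A 0 : (ι → ℝ) →ₗ[ℝ] ι → ℝ) i j)).add
      (contDiff_koszulMatrix_apply hB contDiff_id i j)
  · exact (hA0 ▸ hsymm).add (koszulMatrix_isSymm (hBflip y) y)
  · ext i j
    simp [koszulMatrix, hA0]
  · calc (LinearMap.toMatrix' (A 0 : (ι → ℝ) →ₗ[ℝ] ι → ℝ) + koszulMatrix (B y) y) *ᵥ y
        = A 0 y + D y y y := by
          rw [add_mulVec, koszulMatrix_mulVec_self, LinearMap.toMatrix'_mulVec, hBself,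
            ContinuousLinearMap.coe_coe]
      _ = G y := by rw [hGA y, hG0, zero_add, sub_zero, hAD y, sub_zero, _root_.add_apply]

end Koszul

section VectorFields

variable {ι : Type*} [Fintype ι] {Ω : Set (ι → ℝ)} {X G : (ι → ℝ) → ι → ℝ} {x₀ : ι → ℝ}

theorem exists_local_contDiffOn_posDefSending (hΩ : IsOpen Ω) (hX : ContDiffOn ℝ ∞ X Ω)
    (hG : ContDiffOn ℝ ∞ G Ω) (hx₀ : x₀ ∈ Ω) (hX0 : X x₀ = 0) (hG0 : G x₀ = 0)
    (hsymm : ∀ z w, fderiv ℝ X x₀ z ⬝ᵥ fderiv ℝ G x₀ w = fderiv ℝ G x₀ z ⬝ᵥ fderiv ℝ X x₀ w)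
    (hpos : ∀ z ≠ 0, 0 < fderiv ℝ X x₀ z ⬝ᵥ fderiv ℝ G x₀ z) :
    ∃ U ∈ 𝓝 x₀, ∃ g : (ι → ℝ) → Matrix ι ι ℝ, (∀ i j, ContDiffOn ℝ ∞ (fun x => g x i j) U) ∧
      ∀ x ∈ U, g x ∈ posDefSending (X x) (G x) := by
  classical
  have hinj : Function.Injective (fderiv ℝ X x₀) :=
    (injective_iff_map_eq_zero _).2 fun z hz => by
      by_contra hz0
      simpa [hz] using hpos z hz0
  let Λ : (ι → ℝ) ≃L[ℝ] (ι → ℝ) :=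
    (LinearEquiv.ofInjectiveEndo (fderiv ℝ X x₀ : (ι → ℝ) →ₗ[ℝ] ι → ℝ)
      hinj).toContinuousLinearEquiv
  have hΛ : fderiv ℝ X x₀ = Λ := by ext1 z; rfl
  have hXdiff := (hX.contDiffAt (hΩ.mem_nhds hx₀)).differentiableAt (by simp)
  obtain ⟨G', hG', hG'X⟩ := exists_contDiff_comp_eventuallyEq (n := ⊤) (by simp) hΩ hX hG hx₀ hΛ
  have hG'0 : G' 0 = 0 := by
    simpa only [Function.comp_apply, hX0, hG0] using hG'X.self_of_nhds
  have hG'deriv (z : ι → ℝ) : fderiv ℝ G' 0 (fderiv ℝ X x₀ z) = fderiv ℝ G x₀ z := by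
    rw [← hG'X.fderiv_eq, fderiv_comp x₀ (hG'.differentiable (by simp) _) hXdiff, hX0]
    rfl
  have hposDef : (LinearMap.toMatrix' (fderiv ℝ G' 0 : (ι → ℝ) →ₗ[ℝ] ι → ℝ)).PosDef :=
    posDef_toMatrix'_of_surjective (T := (fderiv ℝ G' 0 : (ι → ℝ) →ₗ[ℝ] ι → ℝ))
      (L := (fderiv ℝ X x₀ : (ι → ℝ) →ₗ[ℝ] ι → ℝ))
      (LinearMap.injective_iff_surjective.1 hinj)
      (fun z w => by simpa [hG'deriv] using hsymm z w)
      (fun z hz => by simpa [hG'deriv] using hpos z hz)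
  obtain ⟨S, hS, hSsymm, hS0, hSG'⟩ := exists_symm_matrix_mulVec_eq hG' hG'0
    hposDef.isHermitian
  have hScont : Continuous S := continuous_matrix fun i j => (hS i j).continuous
  have hSpos : ∀ᶠ x in 𝓝 x₀, (S (X x)).PosDef := by
    have htends := (hScont.continuousAt (x := X x₀)).comp hXdiff.continuousAt
    rw [ContinuousAt, Function.comp_apply, hX0, hS0] at htends
    filter_upwards [htends.eventually (eventually_posDef_of_isHermitian hposDef)] with x hx
      using hx (hSsymm _)
  refine ⟨_, inter_mem (hΩ.mem_nhds hx₀) (hSpos.and hG'X), S ∘ X, fun i j => ?_, fun x hx => ?_⟩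
  · exact (hS i j).comp_contDiffOn (hX.mono inter_subset_left)
  · exact ⟨hx.2.1, ((hSG' _).trans hx.2.2).symm⟩

open scoped Matrix.Norms.Elementwise in
theorem exists_contDiffOn_posDefSending (hΩ : IsOpen Ω) (hX : ContDiffOn ℝ ∞ X Ω)
    (hG : ContDiffOn ℝ ∞ G Ω) (hx₀ : x₀ ∈ Ω) (hX0 : X x₀ = 0) (hG0 : G x₀ = 0)
    (hXG : ∀ x ∈ Ω, x ≠ x₀ → 0 < X x ⬝ᵥ G x)
    (hsymm : ∀ z w, fderiv ℝ X x₀ z ⬝ᵥ fderiv ℝ G x₀ w = fderiv ℝ G x₀ z ⬝ᵥ fderiv ℝ X x₀ w)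
    (hpos : ∀ z ≠ 0, 0 < fderiv ℝ X x₀ z ⬝ᵥ fderiv ℝ G x₀ z) :
    ∃ g : (ι → ℝ) → Matrix ι ι ℝ, (∀ i j, ContDiffOn ℝ ∞ (fun x => g x i j) Ω) ∧
      ∀ x ∈ Ω, g x ∈ posDefSending (X x) (G x) := by
  classical
  obtain ⟨g, hg, hgmem⟩ := exists_contDiffOn_forall_mem_convex_of_local (n := ⊤) hΩ
    (fun x _ => convex_posDefSending (X x) (G x)) fun x hx => by
      by_cases hne : x = x₀
      · subst hne
        obtain ⟨U, hU, g, hg, hgmem⟩ :=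
          exists_local_contDiffOn_posDefSending hΩ hX hG hx₀ hX0 hG0 hsymm hpos
        exact ⟨U, hU, g, contDiffOn_pi.2 fun i => contDiffOn_pi.2 fun j => hg i j, hgmem⟩
      · have hU : IsOpen (Ω \ {x₀}) := hΩ.sdiff isClosed_singleton
        refine ⟨Ω \ {x₀}, hU.mem_nhds ⟨hx, hne⟩, fun y => bfgsMatrix (X y) (G y),
          contDiffOn_pi.2 fun i => contDiffOn_pi.2 fun j y hy => ?_,
          fun y hy => bfgsMatrix_mem_posDefSending (hXG y hy.1 hy.2)⟩
        have hΩy := hΩ.mem_nhds hy.1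
        exact (contDiffAt_bfgsMatrix_apply (hX.contDiffAt hΩy) (hG.contDiffAt hΩy)
          (hXG y hy.1 hy.2) i j).contDiffWithinAt
  exact ⟨g, fun i j => contDiffOn_pi.1 (contDiffOn_pi.1 hg i) j, hgmem⟩

theorem exists_contDiffOn_posDefSending_iff (hΩ : IsOpen Ω) (hX : ContDiffOn ℝ ∞ X Ω)
    (hG : ContDiffOn ℝ ∞ G Ω) (hx₀ : x₀ ∈ Ω) (hG0 : ∀ x ∈ Ω, (G x = 0 ↔ x = x₀))
    (hGinj : Function.Injective (fderiv ℝ G x₀)) :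
    (∃ g : (ι → ℝ) → Matrix ι ι ℝ, (∀ i j, ContDiffOn ℝ ∞ (fun x => g x i j) Ω) ∧
      ∀ x ∈ Ω, g x ∈ posDefSending (X x) (G x)) ↔
    (∀ x ∈ Ω, x ≠ x₀ → 0 < X x ⬝ᵥ G x) ∧ X x₀ = 0 ∧
      (∀ z w, fderiv ℝ X x₀ z ⬝ᵥ fderiv ℝ G x₀ w = fderiv ℝ G x₀ z ⬝ᵥ fderiv ℝ X x₀ w) ∧
      ∀ z ≠ 0, 0 < fderiv ℝ X x₀ z ⬝ᵥ fderiv ℝ G x₀ z := by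
  have hGx₀ : G x₀ = 0 := (hG0 x₀ hx₀).2 rfl
  refine ⟨fun ⟨g, hg, hgmem⟩ => ?_, fun ⟨hXG, hX0, hsymm, hpos⟩ =>
    exists_contDiffOn_posDefSending hΩ hX hG hx₀ hX0 hGx₀ hXG hsymm hpos⟩
  have hXne {x} (hx : x ∈ Ω) (hne : x ≠ x₀) : X x ≠ 0 := fun hXx =>
    hne ((hG0 x hx).1 (by rw [(hgmem x hx).2, hXx, mulVec_zero]))
  have hX0 : X x₀ = 0 := by
    by_contra hne
    simpa [hGx₀] using mem_posDefSending_dotProduct_pos (hgmem x₀ hx₀) hne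
  have hΩx₀ := hΩ.mem_nhds hx₀
  have hderiv (z : ι → ℝ) : g x₀ ∈ posDefSending (fderiv ℝ X x₀ z) (fderiv ℝ G x₀ z) := by
    refine ⟨(hgmem x₀ hx₀).1, ?_⟩
    have hgX : (fun x => g x *ᵥ X x) =ᶠ[𝓝 x₀] G :=
      eventually_of_mem hΩx₀ fun x hx => (hgmem x hx).2.symm
    rw [← hgX.fderiv_eq, fderiv_mulVec_of_eq_zero
      (fun i j => ((hg i j).contDiffAt hΩx₀).differentiableAt (by simp))
      ((hX.contDiffAt hΩx₀).differentiableAt (by simp)) hX0]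
  refine ⟨fun x hx hne => mem_posDefSending_dotProduct_pos (hgmem x hx) (hXne hx hne), hX0,
    fun z w => ?_, fun z hz => ?_⟩
  · rw [(hderiv z).2, (hderiv w).2]
    exact (mulVec_dotProduct_of_isSymm (hderiv z).1.isHermitian _ _).symm
  · refine mem_posDefSending_dotProduct_pos (hderiv z) fun hXz => hz (hGinj ?_)
    rw [(hderiv z).2, hXz, mulVec_zero, map_zero]

end VectorFields

section Hessian

variable {ι : Type*} [Fintype ι] [DecidableEq ι] {f : (ι → ℝ) → ℝ} {x₀ : ι → ℝ}

/-- The Euclidean gradient, as the vector of partial derivatives. -/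
noncomputable def coordGradient (f : (ι → ℝ) → ℝ) (x : ι → ℝ) : ι → ℝ :=
  fun i => fderiv ℝ f x (Pi.single i 1)

/-- The matrix of second partial derivatives, with entry `i j` equal to `∂ᵢ (∂ⱼ f)`. -/
noncomputable def hessianMatrix (f : (ι → ℝ) → ℝ) (x : ι → ℝ) : Matrix ι ι ℝ :=
  .of fun i j => fderiv ℝ (fun y => fderiv ℝ f y (Pi.single j 1)) x (Pi.single i 1)

theorem eq_coordGradient {x w : ι → ℝ} (hw : ∀ v, fderiv ℝ f x v = ∑ i, w i * v i) :
    w = coordGradient f x := by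
  ext i
  rw [coordGradient, hw, Fintype.sum_eq_single i fun j hj => by simp [hj]]
  simp

theorem contDiffOn_coordGradient {Ω : Set (ι → ℝ)} (hΩ : IsOpen Ω) {m n : WithTop ℕ∞}
    (hf : ContDiffOn ℝ n f Ω) (hmn : m + 1 ≤ n) : ContDiffOn ℝ m (coordGradient f) Ω :=
  contDiffOn_pi.2 fun _ => (hf.fderiv_of_isOpen hΩ hmn).clm_apply contDiffOn_const

theorem hessianMatrix_apply (hf : ContDiffAt ℝ 2 f x₀) (i j : ι) :
    hessianMatrix f x₀ i j = fderiv ℝ (fderiv ℝ f) x₀ (Pi.single i 1) (Pi.single j 1) := by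
  have hdiff : DifferentiableAt ℝ (fderiv ℝ f) x₀ :=
    (hf.fderiv_right (m := 1) (by norm_num)).differentiableAt (by simp)
  simp [hessianMatrix, fderiv_clm_apply hdiff (differentiableAt_const _)]

theorem hessianMatrix_isSymm (hf : ContDiffAt ℝ 2 f x₀) : (hessianMatrix f x₀).IsSymm := by
  ext i j
  rw [transpose_apply, hessianMatrix_apply hf, hessianMatrix_apply hf]
  exact hf.isSymmSndFDerivAt (by simp) _ _

theorem fderiv_coordGradient (hf : ContDiffAt ℝ 2 f x₀) (z : ι → ℝ) :
    fderiv ℝ (coordGradient f) x₀ z = hessianMatrix f x₀ *ᵥ z := by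
  have hdiff : DifferentiableAt ℝ (fderiv ℝ f) x₀ :=
    (hf.fderiv_right (m := 1) (by norm_num)).differentiableAt (by simp)
  have hcoord (i : ι) : DifferentiableAt ℝ (fun x => fderiv ℝ f x (Pi.single i 1)) x₀ :=
    hdiff.clm_apply (differentiableAt_const _)
  ext i
  calc fderiv ℝ (coordGradient f) x₀ z i
      = fderiv ℝ (fun x => fderiv ℝ f x (Pi.single i 1)) x₀ z :=
        congrArg (fun T : (ι → ℝ) →L[ℝ] ι → ℝ => T z i) (fderiv_pi hcoord)
    _ = ∑ j, z j * hessianMatrix f x₀ j i := (sum_smul_map_single _ z).symm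
    _ = (hessianMatrix f x₀ *ᵥ z) i := by
        simp only [mulVec, dotProduct, (hessianMatrix_isSymm hf).apply, mul_comm]

end Hessian

theorem gradient_case_characterisation_general {ι : Type*} [Fintype ι] [DecidableEq ι]
    {Ω : Set (ι → ℝ)} (hΩ : IsOpen Ω) {f : (ι → ℝ) → ℝ} {X : (ι → ℝ) → ι → ℝ}
    (hf : ContDiffOn ℝ ∞ f Ω) (hX : ContDiffOn ℝ ∞ X Ω) {gradf : (ι → ℝ) → ι → ℝ}
    (hgrad : ∀ x ∈ Ω, ∀ v, fderiv ℝ f x v = ∑ i, gradf x i * v i) {x₀ : ι → ℝ} (hx₀ : x₀ ∈ Ω)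
    (huniq : ∀ x ∈ Ω, (gradf x = 0 ↔ x = x₀)) {H : Matrix ι ι ℝ}
    (hH : ∀ i j, H i j =
      fderiv ℝ (fun y => fderiv ℝ f y (Pi.single j 1)) x₀ (Pi.single i 1))
    (hHnd : IsUnit H) :
    (∃ g : (ι → ℝ) → Matrix ι ι ℝ, (∀ i j, ContDiffOn ℝ ∞ (fun x => g x i j) Ω) ∧
      (∀ x ∈ Ω, (g x).PosDef) ∧ ∀ x ∈ Ω, gradf x = g x *ᵥ X x) ↔
    (∀ x ∈ Ω, x ≠ x₀ → 0 < X x ⬝ᵥ gradf x) ∧ X x₀ = 0 ∧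
      (∀ z w, H *ᵥ fderiv ℝ X x₀ z ⬝ᵥ w = H *ᵥ z ⬝ᵥ fderiv ℝ X x₀ w) ∧
      ∀ z ≠ 0, 0 < H *ᵥ fderiv ℝ X x₀ z ⬝ᵥ z := by
  obtain rfl : H = hessianMatrix f x₀ := Matrix.ext hH
  have hΩx₀ := hΩ.mem_nhds hx₀
  have hf₂ : ContDiffAt ℝ 2 f x₀ := mod_cast contDiffAt_infty.1 (hf.contDiffAt hΩx₀) 2
  have hgradf : EqOn gradf (coordGradient f) Ω := fun x hx => eq_coordGradient (hgrad x hx)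
  have hderiv (z : ι → ℝ) : fderiv ℝ gradf x₀ z = hessianMatrix f x₀ *ᵥ z := by
    rw [(hgradf.eventuallyEq_of_mem hΩx₀).fderiv_eq, fderiv_coordGradient hf₂]
  have hinj : Function.Injective (fderiv ℝ gradf x₀) := by
    simpa only [funext hderiv] using mulVec_injective_of_isUnit hHnd
  have hswap (z w : ι → ℝ) : hessianMatrix f x₀ *ᵥ fderiv ℝ X x₀ z ⬝ᵥ w =
      fderiv ℝ X x₀ z ⬝ᵥ hessianMatrix f x₀ *ᵥ w :=
    mulVec_dotProduct_of_isSymm (hessianMatrix_isSymm hf₂) _ _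
  simpa only [posDefSending, mem_ofPred_eq, forall₂_and, hderiv, hswap] using
    exists_contDiffOn_posDefSending_iff hΩ hX
      ((contDiffOn_coordGradient hΩ hf le_rfl).congr hgradf) hx₀ huniq hinj

/-- **Gradient-case characterisation (coordinate version).**
Let `Ω ⊆ ℝⁿ` be open and connected, `f : Ω → ℝ` and `X : Ω → ℝⁿ` smooth, `gradf` the
Euclidean gradient of `f` (characterised by `Df x v = ⟨gradf x, v⟩`), with a unique zero
`x₀ ∈ Ω` at which `f` attains its minimum. Assume the Hessian `H` of `f` at `x₀` is
nondegenerate, and `X`, `gradf` are real analytic near `x₀`. Then a smooth field of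
symmetric positive definite matrices `g` with `gradf x = g x · X x` on `Ω` exists iff
(i) `⟨X x, gradf x⟩ > 0` for `x ≠ x₀`, (ii) `X x₀ = 0`, and (iii) the linearisation
`Λ := DX x₀` is symmetric and positive with respect to the Hessian scalar product. -/
theorem gradient_case_characterisation
    (n : ℕ) (hn : 1 ≤ n) (Ω : Set (Fin n → ℝ)) (hΩ : IsOpen Ω) (hconn : IsConnected Ω)
    (f : (Fin n → ℝ) → ℝ) (X : (Fin n → ℝ) → (Fin n → ℝ))
    (hf : ContDiffOn ℝ (⊤ : ℕ∞) f Ω) (hX : ContDiffOn ℝ (⊤ : ℕ∞) X Ω)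
    (gradf : (Fin n → ℝ) → (Fin n → ℝ))
    (hgrad : ∀ x ∈ Ω, ∀ v : Fin n → ℝ, fderiv ℝ f x v = ∑ i, gradf x i * v i)
    (x₀ : Fin n → ℝ) (hx₀ : x₀ ∈ Ω)
    (huniq : ∀ x ∈ Ω, (gradf x = 0 ↔ x = x₀))
    (hmin : ∀ x ∈ Ω, f x₀ ≤ f x)
    (H : Matrix (Fin n) (Fin n) ℝ)
    (hH : ∀ i j, H i j =
      fderiv ℝ (fun y => fderiv ℝ f y (Pi.single j 1)) x₀ (Pi.single i 1))
    (hHnd : IsUnit H)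
    (hana : ∃ V : Set (Fin n → ℝ), IsOpen V ∧ x₀ ∈ V ∧
      AnalyticOnNhd ℝ X V ∧ AnalyticOnNhd ℝ gradf V) :
    (∃ g : (Fin n → ℝ) → Matrix (Fin n) (Fin n) ℝ,
      (∀ i j, ContDiffOn ℝ (⊤ : ℕ∞) (fun x => g x i j) Ω) ∧
      (∀ x ∈ Ω, (g x).PosDef) ∧
      (∀ x ∈ Ω, gradf x = (g x).mulVec (X x)))
    ↔
    ((∀ x ∈ Ω, x ≠ x₀ → 0 < ∑ i, X x i * gradf x i) ∧
     (X x₀ = 0) ∧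
     ((∀ z w : Fin n → ℝ,
        ∑ i, H.mulVec (fderiv ℝ X x₀ z) i * w i = ∑ i, H.mulVec z i * fderiv ℝ X x₀ w i) ∧
      (∀ z : Fin n → ℝ, z ≠ 0 → 0 < ∑ i, H.mulVec (fderiv ℝ X x₀ z) i * z i))) :=
  gradient_case_characterisation_general hΩ hf hX hgrad hx₀ huniq hH hHnd
end

section
/- Let n ≥ 1, let Ω ⊆ ℝⁿ be open, and let X, Y : Ω → ℝⁿ be differentiable. Assume that at every point m ∈ Ω with Y(m) = 0 the derivative DY(m) is invertible, and that: (i) ⟨X(m), Y(m)⟩ > 0 for every m ∈ Ω with Y(m) ≠ 0; (ii) X(m) = 0 for every m ∈ Ω with Y(m) = 0; (iii) for every m ∈ Ω with Y(m) = 0 there exists a symmetric positive definite matrix ḡ_m ∈ Matrix (Fin n) (Fin n) ℝ such that DY(m) v = ḡ_m · (DX(m) v) for all v ∈ ℝⁿ. Then there exists a continuous map g : Ω → Matrix (Fin n) (Fin n) ℝ with g(x) symmetric positive definite for all x ∈ Ω and Y(x) = g(x) · X(x) for all x ∈ Ω. -/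
/-!
Write `Z = A X` for a positive definite matrix `A`. The BFGS update
`A - Z Zᵀ / ⟨X, Z⟩ + Y Yᵀ / ⟨X, Y⟩` maps `X` to `Y`, and it is positive definite as soon as
`⟨X, Y⟩ > 0`. With `A = 1` it solves the problem near every point where `Y ≠ 0`. Near a zero `m`
of `Y`, take `A = ḡ_m`: then `Y = A X + o(X)` because `DX(m)` is injective, so the two rank-one
terms cancel in the limit and the update extends continuously by `A` to `m`. Zeros of `Y` are
isolated, and the conditions on `g(x)` are convex, so a partition of unity glues these local
solutions.
-/

open Asymptotics Filter Matrix Set Topology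

section Asymptotics

variable {α : Type*} {l : Filter α}

lemma tendsto_div_sub_div_zero {𝕜 : Type*} [NormedField 𝕜] {f g u v : α → 𝕜} (huv : u ~[l] v)
    (hfg : (f - g) =o[l] v) (hg : g =O[l] v) : Tendsto (fun a ↦ f a / u a - g a / v a) l (𝓝 0) := by
  -- `(φ * v)⁻¹ = φ⁻¹ * v⁻¹` holds at zeros too, so `u` and `v` are allowed to vanish.
  obtain ⟨φ, hφ, hu⟩ := isEquivalent_iff_exists_eq_mul.1 huv
  have hφ_inv : Tendsto (fun a ↦ (φ a)⁻¹) l (𝓝 1) := by simpa using hφ.inv₀ one_ne_zero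
  have h_diff : Tendsto (fun a ↦ (φ a)⁻¹ * ((f - g) a / v a)) l (𝓝 0) := by
    simpa using hφ_inv.mul hfg.tendsto_div_nhds_zero
  have h_sub_one : Tendsto (fun a ↦ (φ a)⁻¹ - 1) l (𝓝 0) := by simpa using hφ_inv.sub_const 1
  have h_quot : Tendsto (fun a ↦ ((φ a)⁻¹ - 1) * (g a / v a)) l (𝓝 0) :=
    h_sub_one.zero_mul_isBoundedUnder_le (div_isBoundedUnder_of_isBigO hg)
  rw [← add_zero (0 : 𝕜)]
  refine (h_diff.add h_quot).congr' ?_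
  filter_upwards [hu] with a ha
  rw [ha, Pi.mul_apply, Pi.sub_apply, div_mul_eq_div_div_swap]
  ring

lemma isLittleO_dotProduct {ι R : Type*} [Fintype ι] [SeminormedRing R] {U V : α → ι → R}
    {p q : α → ℝ} (hU : U =O[l] p) (hV : V =o[l] q) :
    (fun a ↦ U a ⬝ᵥ V a) =o[l] fun a ↦ p a * q a :=
  IsLittleO.fun_sum fun i _ ↦ (isBigO_pi.1 hU i).mul_isLittleO (isLittleO_pi.1 hV i)

end Asymptotics

section PosDef

variable {ι : Type*} [Fintype ι]

lemma convex_setOf_posDef_and_mulVec_eq (x y : ι → ℝ) :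
    Convex ℝ {A : Matrix ι ι ℝ | A.PosDef ∧ y = A *ᵥ x} := by
  refine convex_iff_forall_pos.2 ?_
  rintro A ⟨hA, hAx⟩ B ⟨hB, hBx⟩ a b ha hb hab
  refine ⟨(hA.smul ha).add (hB.smul hb), ?_⟩
  rw [add_mulVec, smul_mulVec, smul_mulVec, ← hAx, ← hBx, ← add_smul, hab, one_smul]

variable {A : Matrix ι ι ℝ}

lemma dotProduct_mulVec_self_pos (hA : A.PosDef) {x : ι → ℝ} (hx : x ≠ 0) :
    0 < x ⬝ᵥ A *ᵥ x := by
  simpa using hA.dotProduct_mulVec_pos hx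

lemma exists_mul_norm_sq_le_dotProduct_mulVec (hA : A.PosDef) :
    ∃ c > 0, ∀ x : ι → ℝ, c * ‖x‖ ^ 2 ≤ x ⬝ᵥ A *ᵥ x := by
  have h_cont : Continuous fun x : ι → ℝ ↦ x ⬝ᵥ A *ᵥ x := by fun_prop
  obtain ⟨c, hc, h_sphere⟩ := (isCompact_sphere (0 : ι → ℝ) 1).exists_forall_le'
    h_cont.continuousOn fun x hx ↦ dotProduct_mulVec_self_pos hA <|
      ne_zero_of_mem_unit_sphere ⟨x, hx⟩
  refine ⟨c, hc, fun x ↦ ?_⟩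
  rcases eq_or_ne x 0 with rfl | hx
  · simp
  · have hx_norm : 0 < ‖x‖ := norm_pos_iff.2 hx
    have h_unit := h_sphere (‖x‖⁻¹ • x) (by simp [norm_smul, hx_norm.ne'])
    simp only [mulVec_smul, dotProduct_smul, smul_dotProduct, smul_eq_mul] at h_unit
    calc c * ‖x‖ ^ 2 ≤ ‖x‖⁻¹ * (‖x‖⁻¹ * (x ⬝ᵥ A *ᵥ x)) * ‖x‖ ^ 2 := by gcongr
      _ = x ⬝ᵥ A *ᵥ x := by field_simp

lemma isBigO_norm_mul_norm_dotProduct_mulVec {α : Type*} (hA : A.PosDef) (l : Filter α)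
    (X : α → ι → ℝ) : (fun a ↦ ‖X a‖ * ‖X a‖) =O[l] fun a ↦ X a ⬝ᵥ A *ᵥ X a := by
  obtain ⟨c, hc, h_le⟩ := exists_mul_norm_sq_le_dotProduct_mulVec hA
  refine IsBigO.of_bound c⁻¹ (Eventually.of_forall fun a ↦ ?_)
  rw [Real.norm_of_nonneg (by positivity), ← sq, le_inv_mul_iff₀ hc]
  exact (h_le (X a)).trans (Real.le_norm_self _)

end PosDef

section BFGS

variable {ι : Type*} [Fintype ι]

/-- The BFGS update of a symmetric matrix `A`: the rank-two modification used in quasi-Newton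
methods to enforce the secant equation `bfgsUpdate A x y *ᵥ x = y`. A term whose denominator
vanishes is zero, so that `bfgsUpdate A 0 0 = A`. -/
noncomputable def bfgsUpdate (A : Matrix ι ι ℝ) (x y : ι → ℝ) : Matrix ι ι ℝ :=
  A - (x ⬝ᵥ A *ᵥ x)⁻¹ • vecMulVec (A *ᵥ x) (A *ᵥ x) + (x ⬝ᵥ y)⁻¹ • vecMulVec y y

lemma bfgsUpdate_zero (A : Matrix ι ι ℝ) : bfgsUpdate A 0 0 = A := by
  simp [bfgsUpdate]

lemma bfgsUpdate_apply (A : Matrix ι ι ℝ) (x y : ι → ℝ) (i j : ι) :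
    bfgsUpdate A x y i j =
      A i j + (y i * y j / (x ⬝ᵥ y) - (A *ᵥ x) i * (A *ᵥ x) j / (x ⬝ᵥ A *ᵥ x)) := by
  simp only [bfgsUpdate, Matrix.add_apply, Matrix.sub_apply, Matrix.smul_apply, vecMulVec_apply,
    smul_eq_mul]
  ring

lemma bfgsUpdate_mulVec (A : Matrix ι ι ℝ) (x y v : ι → ℝ) :
    bfgsUpdate A x y *ᵥ v = A *ᵥ v - ((A *ᵥ x ⬝ᵥ v) / (x ⬝ᵥ A *ᵥ x)) • A *ᵥ x +
      ((y ⬝ᵥ v) / (x ⬝ᵥ y)) • y := by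
  simp only [bfgsUpdate, add_mulVec, sub_mulVec, smul_mulVec, vecMulVec_mulVec, op_smul_eq_smul,
    smul_smul, div_eq_inv_mul]

lemma bfgsUpdate_mulVec_self {A : Matrix ι ι ℝ} {x y : ι → ℝ} (hA : x ⬝ᵥ A *ᵥ x ≠ 0)
    (hxy : x ⬝ᵥ y ≠ 0) : bfgsUpdate A x y *ᵥ x = y := by
  rw [bfgsUpdate_mulVec, dotProduct_comm _ x, dotProduct_comm _ x, div_self hA, div_self hxy]
  simp

lemma continuousAt_bfgsUpdate {A : Matrix ι ι ℝ} {x y : ι → ℝ} (hA : x ⬝ᵥ A *ᵥ x ≠ 0)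
    (hxy : x ⬝ᵥ y ≠ 0) :
    ContinuousAt (fun p : (ι → ℝ) × (ι → ℝ) ↦ bfgsUpdate A p.1 p.2) (x, y) := by
  refine continuousAt_pi.2 fun i ↦ continuousAt_pi.2 fun j ↦ ?_
  simp only [bfgsUpdate_apply]
  fun_prop (disch := assumption)

lemma isHermitian_bfgsUpdate {A : Matrix ι ι ℝ} (hA : A.IsHermitian) (x y : ι → ℝ) :
    (bfgsUpdate A x y).IsHermitian := by
  ext i j
  have h_symm : A j i = A i j := by simpa using hA.apply i j
  simp only [conjTranspose_apply, bfgsUpdate_apply, star_trivial, h_symm, mul_comm]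

lemma dotProduct_bfgsUpdate_mulVec {A : Matrix ι ι ℝ} (hA : A.IsHermitian) {x : ι → ℝ}
    (hx : x ⬝ᵥ A *ᵥ x ≠ 0) (y v : ι → ℝ) :
    v ⬝ᵥ bfgsUpdate A x y *ᵥ v =
      (v - ((x ⬝ᵥ A *ᵥ v) / (x ⬝ᵥ A *ᵥ x)) • x) ⬝ᵥ
          A *ᵥ (v - ((x ⬝ᵥ A *ᵥ v) / (x ⬝ᵥ A *ᵥ x)) • x) +
        (y ⬝ᵥ v) ^ 2 / (x ⬝ᵥ y) := by
  have h_symm : v ⬝ᵥ A *ᵥ x = x ⬝ᵥ A *ᵥ v := by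
    rw [← dotProduct_transpose_mulVec, (isHermitian_iff_isSymm.1 hA).eq]
  simp only [bfgsUpdate_mulVec, mulVec_sub, mulVec_smul, dotProduct_add, dotProduct_sub,
    sub_dotProduct, dotProduct_smul, smul_dotProduct, smul_eq_mul, dotProduct_comm (A *ᵥ x) v,
    dotProduct_comm v y, h_symm]
  field_simp
  ring

lemma posDef_bfgsUpdate {A : Matrix ι ι ℝ} (hA : A.PosDef) {x y : ι → ℝ} (hxy : 0 < x ⬝ᵥ y) :
    (bfgsUpdate A x y).PosDef := by
  have hx : x ≠ 0 := by
    rintro rfl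
    simp at hxy
  refine .of_dotProduct_mulVec_pos (isHermitian_bfgsUpdate hA.isHermitian x y) fun v hv ↦ ?_
  rw [star_trivial,
    dotProduct_bfgsUpdate_mulVec hA.isHermitian (dotProduct_mulVec_self_pos hA hx).ne']
  set t := (x ⬝ᵥ A *ᵥ v) / (x ⬝ᵥ A *ᵥ x)
  by_cases hw : v - t • x = 0
  · have hvx : v = t • x := sub_eq_zero.1 hw
    have ht : t ≠ 0 := fun ht ↦ hv (by rw [hvx, ht, zero_smul])
    have hyv : y ⬝ᵥ v ≠ 0 := by
      rw [hvx, dotProduct_smul, smul_eq_mul, dotProduct_comm]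
      exact mul_ne_zero ht hxy.ne'
    rw [hw, zero_dotProduct, zero_add]
    positivity
  · have := dotProduct_mulVec_self_pos hA hw
    positivity

lemma tendsto_bfgsUpdate {α : Type*} {l : Filter α} {A : Matrix ι ι ℝ} (hA : A.PosDef)
    {X Y : α → ι → ℝ} (hXY : (fun a ↦ Y a - A *ᵥ X a) =o[l] X) :
    Tendsto (fun a ↦ bfgsUpdate A (X a) (Y a)) l (𝓝 A) := by
  have hr : (fun a ↦ Y a - A *ᵥ X a) =o[l] fun a ↦ ‖X a‖ := hXY.norm_right
  have hX : X =O[l] fun a ↦ ‖X a‖ := (isBigO_refl X l).norm_right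
  have hAX : (fun a ↦ A *ᵥ X a) =O[l] fun a ↦ ‖X a‖ :=
    (A.mulVecLin.toContinuousLinearMap.isBigO_comp X l).norm_right
  have hY : Y =O[l] fun a ↦ ‖X a‖ := by simpa using hr.isBigO.add hAX
  have h_sq := isBigO_norm_mul_norm_dotProduct_mulVec hA l X
  have h_equiv : (fun a ↦ X a ⬝ᵥ Y a) ~[l] fun a ↦ X a ⬝ᵥ A *ᵥ X a := by
    refine ((isLittleO_dotProduct hX hr).trans_isBigO h_sq).congr_left fun a ↦ ?_
    simp only [dotProduct_sub, Pi.sub_apply]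
  refine tendsto_pi_nhds.2 fun i ↦ tendsto_pi_nhds.2 fun j ↦ ?_
  suffices Tendsto (fun a ↦ Y a i * Y a j / (X a ⬝ᵥ Y a) -
      (A *ᵥ X a) i * (A *ᵥ X a) j / (X a ⬝ᵥ A *ᵥ X a)) l (𝓝 0) by
    simpa only [bfgsUpdate_apply, add_zero] using this.const_add (A i j)
  refine tendsto_div_sub_div_zero (f := fun a ↦ Y a i * Y a j) h_equiv ?_ ?_
  · have h_left := (isLittleO_pi.1 hr i).mul_isBigO (isBigO_pi.1 hY j)
    have h_right := (isBigO_pi.1 hAX i).mul_isLittleO (isLittleO_pi.1 hr j)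
    refine ((h_left.add h_right).trans_isBigO h_sq).congr_left fun a ↦ ?_
    simp only [Pi.sub_apply]
    ring
  · exact ((isBigO_pi.1 hAX i).mul (isBigO_pi.1 hAX j)).trans h_sq

end BFGS

theorem exists_continuousMap_posDef_mulVec_eq {α ι : Type*} [TopologicalSpace α] [NormalSpace α]
    [ParacompactSpace α] [Fintype ι] {X Y : α → ι → ℝ} (hX : Continuous X) (hY : Continuous Y)
    (hpos : ∀ a, Y a ≠ 0 → 0 < X a ⬝ᵥ Y a) (hzero : ∀ a, Y a = 0 → X a = 0)
    (hisolated : ∀ m, Y m = 0 → ∀ᶠ a in 𝓝 m, Y a = 0 → a = m)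
    (hmetric : ∀ m, Y m = 0 → ∃ A : Matrix ι ι ℝ, A.PosDef ∧
      (fun a ↦ Y a - A *ᵥ X a) =o[𝓝 m] X) :
    ∃ g : C(α, Matrix ι ι ℝ), ∀ a, (g a).PosDef ∧ Y a = g a *ᵥ X a := by
  classical
  have hX_ne {a : α} (ha : Y a ≠ 0) : X a ≠ 0 := fun h ↦ by simpa [h] using hpos a ha
  have h_mem {A : Matrix ι ι ℝ} (hA : A.PosDef) (a : α) :
      (bfgsUpdate A (X a) (Y a)).PosDef ∧ Y a = bfgsUpdate A (X a) (Y a) *ᵥ X a := by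
    by_cases ha : Y a = 0
    · simpa [ha, hzero a ha, bfgsUpdate_zero] using hA
    · exact ⟨posDef_bfgsUpdate hA (hpos a ha), (bfgsUpdate_mulVec_self
        (dotProduct_mulVec_self_pos hA (hX_ne ha)).ne' (hpos a ha).ne').symm⟩
  have h_cont {A : Matrix ι ι ℝ} (hA : A.PosDef) {a : α} (ha : Y a ≠ 0) :
      ContinuousAt (fun a ↦ bfgsUpdate A (X a) (Y a)) a :=
    (continuousAt_bfgsUpdate (dotProduct_mulVec_self_pos hA (hX_ne ha)).ne' (hpos a ha).ne').comp₂
      hX.continuousAt hY.continuousAt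
  refine exists_continuous_forall_mem_convex_of_local
    (fun a ↦ convex_setOf_posDef_and_mulVec_eq (X a) (Y a)) fun m ↦ ?_
  obtain ⟨A, hA, h_cont_nhds⟩ : ∃ A : Matrix ι ι ℝ, A.PosDef ∧
      ∀ᶠ b in 𝓝 m, ContinuousAt (fun a ↦ bfgsUpdate A (X a) (Y a)) b := by
    by_cases hm : Y m = 0
    · obtain ⟨A, hA, hXY⟩ := hmetric m hm
      refine ⟨A, hA, (hisolated m hm).mono fun b hb ↦ ?_⟩
      by_cases hYb : Y b = 0
      · obtain rfl := hb hYb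
        exact continuousAt_of_tendsto_nhds (tendsto_bfgsUpdate hA hXY)
      · exact h_cont hA hYb
    · exact ⟨1, .one, (hY.continuousAt.eventually_ne hm).mono fun b hb ↦ h_cont .one hb⟩
  exact ⟨_, h_cont_nhds, _, fun b hb ↦ ContinuousAt.continuousWithinAt hb, fun b _ ↦ h_mem hA b⟩

section Derivative

variable {E F G : Type*} [NormedAddCommGroup E] [NormedSpace ℝ E] [NormedAddCommGroup F]
  [NormedSpace ℝ F] [NormedAddCommGroup G] [NormedSpace ℝ G] {s : Set E} {m : E}

lemma isBigO_sub_of_hasFDerivWithinAt_of_injective [FiniteDimensional ℝ F] {f : E → F}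
    {f' : E →L[ℝ] F} (hf : HasFDerivWithinAt f f' s m) (hfm : f m = 0)
    (hf' : Function.Injective f') : (fun x ↦ x - m) =O[𝓝[s] m] f := by
  have : FiniteDimensional ℝ E := .of_injective f'.toLinearMap hf'
  have h_inducing : IsInducing f' :=
    (LinearMap.isClosedEmbedding_of_injective (LinearMap.ker_eq_bot.2 hf')).isInducing
  simpa [hfm] using (hf.isTheta_sub h_inducing).isBigO_symm

lemma isLittleO_sub_comp_of_hasFDerivWithinAt {f : E → F} {g : E → G} {f' : E →L[ℝ] F}
    {L : F →L[ℝ] G} (hf : HasFDerivWithinAt f f' s m)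
    (hg : HasFDerivWithinAt g (L ∘L f') s m) (hfm : f m = 0) (hgm : g m = 0) :
    (fun x ↦ g x - L (f x)) =o[𝓝[s] m] fun x ↦ x - m := by
  simpa [hfm, hgm] using (hg.fun_sub (L.hasFDerivAt.comp_hasFDerivWithinAt m hf)).isLittleO

end Derivative

theorem continuous_metric_exists_general {E ι : Type*} [NormedAddCommGroup E] [NormedSpace ℝ E]
    [Fintype ι] {Ω : Set E} {X Y : E → ι → ℝ} {X' Y' : E → E →L[ℝ] ι → ℝ}
    (hX : ContinuousOn X Ω) (hY : ContinuousOn Y Ω)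
    (hX' : ∀ m ∈ Ω, Y m = 0 → HasFDerivWithinAt X (X' m) Ω m)
    (hY' : ∀ m ∈ Ω, Y m = 0 → HasFDerivWithinAt Y (Y' m) Ω m)
    (hinj : ∀ m ∈ Ω, Y m = 0 → Function.Injective (Y' m))
    (hpos : ∀ m ∈ Ω, Y m ≠ 0 → 0 < X m ⬝ᵥ Y m)
    (hzero : ∀ m ∈ Ω, Y m = 0 → X m = 0)
    (hmetric : ∀ m ∈ Ω, Y m = 0 → ∃ A : Matrix ι ι ℝ, A.PosDef ∧
      ∀ v, Y' m v = A *ᵥ X' m v) :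
    ∃ g : E → Matrix ι ι ℝ, ContinuousOn g Ω ∧ (∀ x ∈ Ω, (g x).PosDef) ∧
      ∀ x ∈ Ω, Y x = g x *ᵥ X x := by
  classical
  obtain ⟨g, hg⟩ : ∃ g : C(Ω, Matrix ι ι ℝ), ∀ x : Ω, (g x).PosDef ∧ Y x = g x *ᵥ X x := by
    refine exists_continuousMap_posDef_mulVec_eq hX.domRestrict hY.domRestrict
      (fun m ↦ hpos m m.2) (fun m ↦ hzero m m.2) (fun ⟨m, hm⟩ hYm ↦ ?_) (fun ⟨m, hm⟩ hYm ↦ ?_)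
    · have hO := isBigO_sub_of_hasFDerivWithinAt_of_injective (hY' m hm hYm) hYm (hinj m hm hYm)
      rw [nhdsWithin_eq_map_subtype_coe hm] at hO
      simpa [sub_eq_zero, Subtype.ext_iff] using (isBigO_map.1 hO).eq_zero_imp
    · obtain ⟨A, hA, hXY'⟩ := hmetric m hm hYm
      let L := A.mulVecLin.toContinuousLinearMap
      have hXm := hzero m hm hYm
      have hX'_inj : Function.Injective (X' m) := fun v w hvw ↦
        hinj m hm hYm (by rw [hXY', hXY', hvw])
      have hY'_eq : Y' m = L ∘L X' m := ContinuousLinearMap.ext hXY'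
      have ho := (isLittleO_sub_comp_of_hasFDerivWithinAt (hX' m hm hYm)
        (hY'_eq ▸ hY' m hm hYm) hXm hYm).trans_isBigO
          (isBigO_sub_of_hasFDerivWithinAt_of_injective (hX' m hm hYm) hXm hX'_inj)
      rw [nhdsWithin_eq_map_subtype_coe hm] at ho
      exact ⟨A, hA, isLittleO_map.1 ho⟩
  refine ⟨fun x ↦ if hx : x ∈ Ω then g ⟨x, hx⟩ else 0, ?_, fun x hx ↦ ?_, fun x hx ↦ ?_⟩
  · rw [continuousOn_iff_continuous_domRestrict]
    exact g.continuous.congr fun x ↦ by simp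
  · simpa [hx] using (hg ⟨x, hx⟩).1
  · simpa [hx] using (hg ⟨x, hx⟩).2

/-- **Existence of a continuous metric for differentiable fields.**
Let `n ≥ 1`, `Ω ⊆ ℝⁿ` open, and `X Y : Ω → ℝⁿ` differentiable. Assume that at every
`m ∈ Ω` with `Y m = 0` the derivative `DY m` is invertible, and that
(i) `⟨X m, Y m⟩ > 0` whenever `Y m ≠ 0`, (ii) `X m = 0` whenever `Y m = 0`, and
(iii) at each zero `m` of `Y` there is a symmetric positive definite `ḡ_m` with
`DY m v = ḡ_m · (DX m v)` for all `v`. Then there exists a continuous field of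
symmetric positive definite matrices `g` with `Y x = g x · X x` on `Ω`. -/
theorem continuous_metric_exists
    (n : ℕ) (hn : 1 ≤ n) (Ω : Set (Fin n → ℝ)) (hΩ : IsOpen Ω)
    (X Y : (Fin n → ℝ) → (Fin n → ℝ))
    (hX : DifferentiableOn ℝ X Ω) (hY : DifferentiableOn ℝ Y Ω)
    (hcrit : ∀ m ∈ Ω, Y m = 0 → Function.Bijective (fderiv ℝ Y m))
    (hi : ∀ m ∈ Ω, Y m ≠ 0 → 0 < ∑ i, X m i * Y m i)
    (hii : ∀ m ∈ Ω, Y m = 0 → X m = 0)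
    (hiii : ∀ m ∈ Ω, Y m = 0 → ∃ gbar : Matrix (Fin n) (Fin n) ℝ, gbar.PosDef ∧
      ∀ v : Fin n → ℝ, fderiv ℝ Y m v = gbar.mulVec (fderiv ℝ X m v)) :
    ∃ g : (Fin n → ℝ) → Matrix (Fin n) (Fin n) ℝ,
      (∀ i j, ContinuousOn (fun x => g x i j) Ω) ∧
      (∀ x ∈ Ω, (g x).PosDef) ∧
      (∀ x ∈ Ω, Y x = (g x).mulVec (X x)) := by
  have hX' (m : Fin n → ℝ) (hm : m ∈ Ω) := (hX.differentiableAt (hΩ.mem_nhds hm)).hasFDerivAt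
  have hY' (m : Fin n → ℝ) (hm : m ∈ Ω) := (hY.differentiableAt (hΩ.mem_nhds hm)).hasFDerivAt
  obtain ⟨g, hg, hg_posDef, hgX⟩ := continuous_metric_exists_general hX.continuousOn
    hY.continuousOn (fun m hm _ ↦ (hX' m hm).hasFDerivWithinAt)
    (fun m hm _ ↦ (hY' m hm).hasFDerivWithinAt) (fun m hm hYm ↦ (hcrit m hm hYm).1) hi hii hiii
  exact ⟨g, fun i j ↦ (continuous_apply_apply i j).comp_continuousOn hg, hg_posDef, hgX⟩
end
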